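/- For m > 1, every automorphism of B(m,m) has infinitely many twisted conjugacy classes; i.e., B(m,m) has property R_∞. -/

import Mathlib

/-- The defining relation of the Baumslag-Solitar group `B(m,n)`:
`a⁻¹ bᵐ a = bⁿ`, where `a` is `FreeGroup.of false` and `b` is `FreeGroup.of true`. -/
def BSrel (m n : ℤ) : Set (FreeGroup Bool) :=
  {(FreeGroup.of false)⁻¹ * (FreeGroup.of true) ^ m * FreeGroup.of false *
    ((FreeGroup.of true) ^ n)⁻¹}

/-- The Baumslag-Solitar group `B(m,n) = ⟨a, b | a⁻¹ bᵐ a = bⁿ⟩`. -/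
abbrev BS (m n : ℤ) : Type := PresentedGroup (BSrel m n)

/-- The generator `a` of `B(m,n)`. -/
def BSa (m n : ℤ) : BS m n := PresentedGroup.of false

/-- The generator `b` of `B(m,n)`. -/
def BSb (m n : ℤ) : BS m n := PresentedGroup.of true

/-- Twisted conjugacy: `α` and `α'` are `φ`-conjugate if `α' = γ * α * φ(γ)⁻¹`
for some `γ`. -/
def twistedConj {G : Type*} [Group G] (φ : G →* G) (α α' : G) : Prop :=
  ∃ γ : G, α' = γ * α * (φ γ)⁻¹

/-!
Every automorphism `φ` of `B(m,m)` either preserves or inverts the exponent sum of `a`. If it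
preserves it, the exponent sum of `a` separates infinitely many twisted conjugacy classes.

Suppose `φ` inverts it, and let `p` be a prime dividing `m`. The normal closure `K` of `b` is the
kernel of the exponent sum of `a`, and its largest abelian quotient of exponent `p` is
`𝔽_p[T;T⁻¹]`, where `T ^ n` is the class of `aⁿ b a⁻ⁿ`. On this quotient `φ` induces a map
`Φ q = u * q(T⁻¹)` with `u = ± T ^ k`, because `u` is a unit and `φ` changes the exponent sum of `b`
by a sign on `K`. Hence `Φ` is an involution. Twisted conjugate elements of `K` are conjugated by an
element of `K`, so their images `q` and `q'` differ by a value of `1 - Φ` and satisfy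
`q + Φ q = q' + Φ q'`, which fails for distinct large powers of `T`.
-/

open LaurentPolynomial Multiplicative

namespace twistedConj

variable {G : Type*} [Group G] {φ : G →* G}

theorem equivalence (φ : G →* G) : Equivalence (twistedConj φ) where
  refl x := ⟨1, by simp⟩
  symm := by
    rintro x y ⟨γ, rfl⟩
    exact ⟨γ⁻¹, by simp [mul_assoc]⟩
  trans := by
    rintro x y z ⟨γ, rfl⟩ ⟨δ, rfl⟩
    exact ⟨δ * γ, by simp [mul_assoc]⟩

theorem infinite_quot {ι : Type*} [Infinite ι] (s : ι → G)
    (hs : ∀ i j, twistedConj φ (s i) (s j) → i = j) : Infinite (Quot (twistedConj φ)) :=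
  Infinite.of_injective (fun i ↦ Quot.mk (twistedConj φ) (s i)) fun i j hij ↦
    hs i j (((equivalence φ).quot_mk_eq_iff _ _).1 hij)

theorem infinite_quot_of_comp_eq {H : Type*} [CommGroup H] [Infinite H] {π : G →* H}
    (hπ : Function.Surjective π) (h : π.comp φ = π) : Infinite (Quot (twistedConj φ)) := by
  have map_eq : ∀ x y, twistedConj φ x y → π x = π y := by
    rintro x _ ⟨γ, rfl⟩
    have hγ : π (φ γ) = π γ := DFunLike.congr_fun h γ
    simp [hγ]
  refine Infinite.of_surjective (Quot.lift π map_eq) fun z ↦ ?_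
  obtain ⟨x, rfl⟩ := hπ z
  exact ⟨Quot.mk _ x, rfl⟩

-- Since `π` is inverted, only elements of its kernel can twist-conjugate `x` to `y`; there
-- `d y + Φ (d γ) = d γ + d x`, and adding the image under the involution `Φ` eliminates `γ`.
theorem add_map_eq_add_map {H M : Type*} [CommGroup H] [IsMulTorsionFree H] [AddCommGroup M]
    {π : G →* H} (hπ : π.comp φ = π⁻¹) {d : G → M}
    (hd : ∀ x y, π x = 1 → d (x * y) = d x + d y) {Φ : M →+ M} (hΦ : Function.Involutive Φ)
    (hdφ : ∀ g, π g = 1 → d (φ g) = Φ (d g)) {x y : G} (hx : π x = 1) (hy : π y = 1)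
    (hxy : twistedConj φ x y) : d x + Φ (d x) = d y + Φ (d y) := by
  obtain ⟨γ, hγ⟩ := hxy
  have hπγ : π γ = 1 := by
    have hπφ : π (φ γ) = (π γ)⁻¹ := DFunLike.congr_fun hπ γ
    have hsq : π γ ^ 2 = 1 := by
      simpa [hπφ, hx, hy, sq] using (congrArg π hγ).symm
    simpa using hsq
  have hcob : d y + Φ (d γ) = d γ + d x := by
    rw [← hdφ γ hπγ, ← hd y _ hy, ← hd γ _ hπγ, hγ, inv_mul_cancel_right]
  have hcob' : Φ (d y) + d γ = Φ (d γ) + Φ (d x) := by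
    simpa [hΦ (d γ)] using congrArg Φ hcob
  rw [← add_left_inj (d γ + Φ (d γ))]
  calc d x + Φ (d x) + (d γ + Φ (d γ)) = (d γ + d x) + (Φ (d γ) + Φ (d x)) := by abel
    _ = (d y + Φ (d γ)) + (Φ (d y) + d γ) := by rw [hcob, hcob']
    _ = d y + Φ (d y) + (d γ + Φ (d γ)) := by abel

end twistedConj

/-- `d : G → R` is a crossed homomorphism (a `1`-cocycle) when `G` acts on the ring `R` by
multiplication through the character `χ`. -/
def IsCrossedHom {G R : Type*} [Group G] [CommRing R] (χ : G →* R) (d : G → R) : Prop :=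
  ∀ x y, d (x * y) = d x + χ x * d y

namespace IsCrossedHom

variable {G R : Type*} [Group G] [CommRing R] {χ : G →* R} {d e : G → R}

theorem map_one (hd : IsCrossedHom χ d) : d 1 = 0 := by
  simpa using hd 1 1

theorem map_inv (hd : IsCrossedHom χ d) (x : G) : d x⁻¹ = -(χ x⁻¹ * d x) := by
  rw [eq_neg_iff_add_eq_zero, ← hd, inv_mul_cancel, hd.map_one]

theorem const_mul (hd : IsCrossedHom χ d) (r : R) : IsCrossedHom χ fun g ↦ r * d g :=
  fun x y ↦ by simp only [hd x y]; ring

theorem sub (hd : IsCrossedHom χ d) (he : IsCrossedHom χ e) :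
    IsCrossedHom χ fun g ↦ d g - e g :=
  fun x y ↦ by simp only [hd x y, he x y]; ring

theorem comp {G' : Type*} [Group G'] (hd : IsCrossedHom χ d) (f : G' →* G) :
    IsCrossedHom (χ.comp f) fun g ↦ d (f g) :=
  fun x y ↦ by simp [hd (f x) (f y)]

theorem map {S : Type*} [CommRing S] (hd : IsCrossedHom χ d) (f : R →+* S) :
    IsCrossedHom ((f : R →* S).comp χ) fun g ↦ f (d g) :=
  fun x y ↦ by simp [hd x y]

theorem sub_one_mul (χ : G →* R) (r : R) : IsCrossedHom χ fun g ↦ (χ g - 1) * r :=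
  fun x y ↦ by simp only [map_mul]; ring

theorem eq_of_eqOn_dense (hd : IsCrossedHom χ d) (he : IsCrossedHom χ e) {s : Set G}
    (hs : Subgroup.closure s = ⊤) (h : s.EqOn d e) : d = e := by
  funext g
  have hg : g ∈ Subgroup.closure s := hs ▸ Subgroup.mem_top g
  induction hg using Subgroup.closure_induction with
  | mem x hx => exact h hx
  | one => rw [hd.map_one, he.map_one]
  | mul x y _ _ hx hy => rw [hd, he, hx, hy]
  | inv x _ hx => rw [hd.map_inv, he.map_inv, hx]

-- `(χ a - 1) * (d - e)` agrees on `a` and `b` with the principal crossed homomorphism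
-- `g ↦ (χ g - 1) * (d a - e a)`, which vanishes wherever `χ` is trivial.
theorem eq_of_map_eq_one [IsDomain R] (hd : IsCrossedHom χ d) (he : IsCrossedHom χ e) {a b : G}
    (hab : Subgroup.closure {a, b} = ⊤) (ha : χ a ≠ 1) (hb : χ b = 1) (hdeb : d b = e b) {g : G}
    (hg : χ g = 1) : d g = e g := by
  have hprincipal := ((hd.sub he).const_mul (χ a - 1)).eq_of_eqOn_dense
    (sub_one_mul χ (d a - e a)) hab (by simp [Set.EqOn, hb, hdeb])
  have h := congrFun hprincipal g
  rw [hg, sub_self, zero_mul, mul_eq_zero] at h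
  exact sub_eq_zero.1 (h.resolve_left (sub_ne_zero.2 ha))

end IsCrossedHom

section LaurentPolynomial

variable {R : Type*} [CommRing R]

theorem T_eq_one_iff [Nontrivial R] {n : ℤ} : (T n : R[T;T⁻¹]) = 1 ↔ n = 0 := by
  refine ⟨fun h ↦ ?_, fun h ↦ by rw [h, T_zero]⟩
  have hcoeff := congrArg (fun q ↦ q.coeff 0) h
  by_contra hn
  simp [← T_zero, T_apply, hn] at hcoeff

variable [IsDomain R]

theorem exists_C_mul_T_of_isUnit {u : R[T;T⁻¹]} (hu : IsUnit u) :
    ∃ (c : R) (k : ℤ), u = C c * T k := by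
  obtain ⟨w, huw⟩ := hu.exists_right_inv
  obtain ⟨n, u', hu'⟩ := exists_T_pow u
  obtain ⟨l, w', hw'⟩ := exists_T_pow w
  have hmul : u' * w' = Polynomial.X ^ (n + l) := by
    apply Polynomial.toLaurent_injective
    rw [map_mul, hu', hw', Polynomial.toLaurent_X_pow, Nat.cast_add, T_add]
    linear_combination (T n * T l) * huw
  obtain ⟨i, -, hassoc⟩ := (dvd_prime_pow Polynomial.prime_X _).1 ⟨w', hmul.symm⟩
  obtain ⟨v, hv⟩ := hassoc.symm
  obtain ⟨c, -, hc⟩ := Polynomial.isUnit_iff.1 v.isUnit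
  refine ⟨c, i - n, ?_⟩
  calc u = Polynomial.toLaurent u' * T (-n) := by rw [hu', mul_T_assoc]; simp
    _ = C c * T (i - n) := by
      rw [← hv, ← hc, map_mul, Polynomial.toLaurent_X_pow, Polynomial.toLaurent_C, T_sub]
      ring

theorem mul_invert_self_of_isUnit {u : R[T;T⁻¹]} (hu : IsUnit u) :
    u * invert u = C (eval₂ (RingHom.id R) 1 u ^ 2) := by
  obtain ⟨c, k, rfl⟩ := exists_C_mul_T_of_isUnit hu
  have hT : (T k * T (-k) : R[T;T⁻¹]) = 1 := by rw [← T_add, add_neg_cancel, T_zero]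
  simp only [map_mul, invert_C, invert_T, eval₂_C, eval₂_T, RingHom.id_apply, one_zpow,
    Units.val_one, mul_one, map_pow]
  linear_combination (C c) ^ 2 * hT

-- Writing `u = c * T ^ k`, the exponents `n` and `k - n` lie on different sides of `k / 2`.
theorem exists_injOn_T_add_mul_invert {u : R[T;T⁻¹]} (hu : IsUnit u) :
    ∃ N : ℤ, (Set.Ici N).InjOn fun n ↦ T n + u * invert (T n) := by
  obtain ⟨c, k, rfl⟩ := exists_C_mul_T_of_isUnit hu
  refine ⟨|k| + 1, fun i hi j hj hij ↦ ?_⟩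
  rw [Set.mem_Ici] at hi hj
  have hk := le_abs_self k
  have hk' := abs_nonneg k
  by_contra hne
  have coeff_eq (n : ℤ) : (T n + C c * T k * invert (T n) : R[T;T⁻¹]).coeff i =
      (if n = i then 1 else 0) + if k - n = i then c else 0 := by
    rw [invert_T, mul_assoc, ← T_add, ← sub_eq_add_neg, ← single_eq_C_mul_T]
    simp only [T, AddMonoidAlgebra.coeff_add, AddMonoidAlgebra.coeff_single, Finsupp.add_apply,
      Finsupp.single_apply]
  have h := congrArg (fun q ↦ q.coeff i) hij
  simp only [coeff_eq] at h
  rw [if_pos trivial, if_neg (by omega), if_neg (by omega), if_neg (by omega)] at h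
  simp at h

end LaurentPolynomial

theorem eq_ofAdd_one_or_inv_of_zpow_eq {x : Multiplicative ℤ} {k : ℤ} (h : x ^ k = ofAdd 1) :
    x = ofAdd 1 ∨ x = (ofAdd 1)⁻¹ := by
  have hmul : k * x.toAdd = 1 := by simpa using congrArg toAdd h
  exact Int.isUnit_iff.1 (IsUnit.of_mul_eq_one_right _ hmul)

namespace BS

section Presentation

variable {m n : ℤ}

theorem rel (m n : ℤ) : (BSa m n)⁻¹ * BSb m n ^ m * BSa m n = BSb m n ^ n :=
  mul_inv_eq_one.1 (PresentedGroup.one_of_mem (rels := BSrel m n) rfl)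

theorem closure_pair (m n : ℤ) : Subgroup.closure {BSa m n, BSb m n} = ⊤ := by
  rw [← PresentedGroup.closure_range_of (BSrel m n)]
  congr 1
  ext g
  simp [BSa, BSb]

theorem hom_ext {M : Type*} [Monoid M] {f g : BS m n →* M} (ha : f (BSa m n) = g (BSa m n))
    (hb : f (BSb m n) = g (BSb m n)) : f = g :=
  MonoidHom.eq_of_eqOn_dense (closure_pair m n) (by simp [Set.EqOn, ha, hb])

variable {G : Type*} [Group G]

/-- The homomorphism out of `B(m,n)` given by the images `x` of `a` and `y` of `b`. -/
def lift (x y : G) (h : x⁻¹ * y ^ m * x = y ^ n) : BS m n →* G :=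
  PresentedGroup.toGroup (f := fun i : Bool ↦ if i then y else x) (by
    rintro _ rfl
    simpa [mul_inv_eq_one] using h)

@[simp]
theorem lift_a (x y : G) (h : x⁻¹ * y ^ m * x = y ^ n) : lift x y h (BSa m n) = x := by
  simp [lift, BSa]

@[simp]
theorem lift_b (x y : G) (h : x⁻¹ * y ^ m * x = y ^ n) : lift x y h (BSb m n) = y := by
  simp [lift, BSb]

theorem b_zpow_mem_center (m : ℤ) : BSb m m ^ m ∈ Subgroup.center (BS m m) := by
  have hle : Subgroup.closure {BSa m m, BSb m m} ≤ Subgroup.centralizer {BSb m m ^ m} := by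
    have ha : BSa m m * BSb m m ^ m = BSb m m ^ m * BSa m m := by
      rw [eq_comm, ← inv_mul_eq_iff_eq_mul, ← mul_assoc, rel]
    simp [Subgroup.closure_le, Set.insert_subset_iff, Subgroup.mem_centralizer_singleton_iff, ha,
      ← zpow_add_one, ← zpow_one_add, add_comm]
  exact Subgroup.mem_center_iff.2 fun g ↦
    Subgroup.mem_centralizer_singleton_iff.1 (hle (closure_pair m m ▸ Subgroup.mem_top g))

end Presentation

section Exponents

variable {m n : ℤ}

/-- The exponent sum of `a`, which is well defined in every `B(m,n)`. -/
def aExp : BS m n →* Multiplicative ℤ := lift (ofAdd 1) 1 (by simp)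

/-- The exponent sum of `b`, which is well defined in `B(m,m)`. -/
def bExp : BS m m →* Multiplicative ℤ := lift 1 (ofAdd 1) (by simp)

@[simp] theorem aExp_a : aExp (BSa m n) = ofAdd 1 := lift_a ..

@[simp] theorem aExp_b : aExp (BSb m n) = 1 := lift_b ..

@[simp] theorem bExp_a : bExp (BSa m m) = 1 := lift_a ..

@[simp] theorem bExp_b : bExp (BSb m m) = ofAdd 1 := lift_b ..

theorem aExp_surjective : Function.Surjective (aExp : BS m n →* Multiplicative ℤ) :=
  fun k ↦ ⟨BSa m n ^ k.toAdd, by simp [← ofAdd_zsmul]⟩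

theorem map_eq_zpow_mul_zpow {H : Type*} [CommGroup H] (f : BS m m →* H) (g : BS m m) :
    f g = f (BSa m m) ^ (aExp g).toAdd * f (BSb m m) ^ (bExp g).toAdd := by
  have h : f = (zpowersHom H (f (BSa m m))).comp aExp * (zpowersHom H (f (BSb m m))).comp bExp :=
    hom_ext (by simp) (by simp)
  simpa using DFunLike.congr_fun h g

end Exponents

section FoxDerivative

variable {m : ℤ} {R : Type*} [CommRing R] (hm : (m : R) = 0)

/-- The action of `B(m,m)` on the affine line over `R[T;T⁻¹]` in which `a` acts by `x ↦ T * x` and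
`b` by `x ↦ x + 1`; in characteristic dividing `m` the element `bᵐ` acts trivially. -/
noncomputable def affineAction : BS m m →* (R[T;T⁻¹] ≃ᵃ[R[T;T⁻¹]] R[T;T⁻¹]) :=
  lift (AffineEquiv.homothetyUnitsMulHom 0 (isUnit_T 1).unit)
    (AffineEquiv.constVAddHom _ _ (ofAdd 1)) (by
      have hm' : (m : R[T;T⁻¹]) = 0 := by simpa using congrArg C hm
      have hb : AffineEquiv.constVAddHom R[T;T⁻¹] R[T;T⁻¹] (ofAdd 1) ^ m = 1 := by
        rw [← map_zpow, ← ofAdd_zsmul, zsmul_one, hm', ofAdd_zero, map_one]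
      simp only [hb, mul_one, inv_mul_cancel])

variable (m R) in
/-- The character of `B(m,m)` with values in the monomials `T ^ k` given by the exponent of `a`. -/
noncomputable def tChar : BS m m →* R[T;T⁻¹] := (AddMonoidAlgebra.of R ℤ).comp aExp

/-- The Fox derivative `∂/∂b` of `B(m,m)` with coefficients in `R[T;T⁻¹]`, where `a` maps to `T` and
`b` to `1`. On the kernel of `aExp` it is additive and sends `aⁿ b a⁻ⁿ` to `T ^ n`. -/
noncomputable def foxDeriv (g : BS m m) : R[T;T⁻¹] := affineAction hm g 0

theorem tChar_apply (g : BS m m) : tChar m R g = T (aExp g).toAdd := rfl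

theorem tChar_eq_one_iff [Nontrivial R] {g : BS m m} : tChar m R g = 1 ↔ aExp g = 1 := by
  rw [tChar_apply, T_eq_one_iff, toAdd_eq_zero]

theorem affineAction_apply (g : BS m m) (x : R[T;T⁻¹]) :
    affineAction hm g x = tChar m R g * x + foxDeriv hm g := by
  have hlinear : LinearEquiv.automorphismGroup.toLinearMapMonoidHom.comp
      (AffineEquiv.linearHom.comp (affineAction hm)) =
      (Algebra.lmul R[T;T⁻¹] R[T;T⁻¹] : _ →* _).comp (tChar m R) := by
    refine hom_ext ?_ (by ext; simp [affineAction, tChar_apply])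
    have ha : (affineAction hm (BSa m m)).linear 1 = T 1 := by
      rw [affineAction, lift_a]
      exact (LinearMap.congr_fun (AffineMap.homothety_linear (0 : R[T;T⁻¹]) (T 1)) 1).trans
        (mul_one _)
    ext1
    simpa [tChar_apply] using ha
  have hx : (affineAction hm g).linear x = tChar m R g * x :=
    LinearMap.congr_fun (DFunLike.congr_fun hlinear g) x
  simpa [hx, foxDeriv] using (affineAction hm g).map_vadd 0 x

theorem isCrossedHom_foxDeriv : IsCrossedHom (tChar m R) (foxDeriv hm) := fun x y ↦ by
  rw [foxDeriv, map_mul, AffineEquiv.mul_def, AffineEquiv.trans_apply, affineAction_apply,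
    add_comm]
  rfl

theorem foxDeriv_a_zpow (k : ℤ) : foxDeriv hm (BSa m m ^ k) = 0 := by
  rw [foxDeriv, map_zpow, affineAction, lift_a, ← map_zpow]
  rw [AffineEquiv.coe_homothetyUnitsMulHom_apply, AffineMap.homothety_apply_same]

@[simp]
theorem foxDeriv_b : foxDeriv hm (BSb m m) = 1 := by
  simp [foxDeriv, affineAction]

theorem foxDeriv_conj_b (k : ℤ) :
    foxDeriv hm (BSa m m ^ k * BSb m m * BSa m m ^ (-k)) = T k := by
  rw [isCrossedHom_foxDeriv, isCrossedHom_foxDeriv, foxDeriv_a_zpow, foxDeriv_a_zpow, foxDeriv_b,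
    tChar_apply]
  simp

theorem eval₂_one_foxDeriv (g : BS m m) :
    eval₂ (RingHom.id R) 1 (foxDeriv hm g) = (bExp g).toAdd := by
  have hbExp : IsCrossedHom ((eval₂ (RingHom.id R) 1 : _ →* R).comp (tChar m R))
      fun g ↦ ((bExp g).toAdd : R) := fun x y ↦ by
    simp [tChar_apply]
  have ha : foxDeriv hm (BSa m m) = 0 := by simpa using foxDeriv_a_zpow hm 1
  exact congrFun (((isCrossedHom_foxDeriv hm).map _).eq_of_eqOn_dense hbExp (closure_pair m m)
    (by simp [Set.EqOn, ha])) g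

include hm in
theorem aExp_eq_one_of_commute_b [Nontrivial R] {g : BS m m} (h : Commute g (BSb m m)) :
    aExp g = 1 := by
  have hfox := congrArg (foxDeriv hm) h.eq
  rw [isCrossedHom_foxDeriv, isCrossedHom_foxDeriv, foxDeriv_b,
    (tChar_eq_one_iff (R := R)).2 aExp_b] at hfox
  rw [← tChar_eq_one_iff (R := R)]
  linear_combination hfox

end FoxDerivative

section Automorphisms

variable {m : ℤ} {R : Type*} [CommRing R] (hm : (m : R) = 0) (hm₀ : m ≠ 0)
  (φ : BS m m ≃* BS m m)

include hm hm₀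

theorem aExp_map_b [Nontrivial R] : aExp (φ (BSb m m)) = 1 := by
  have hcomm : Commute (φ (BSb m m) ^ m) (BSb m m) := by
    simpa using Commute.map
      (Subgroup.mem_center_iff.1 (b_zpow_mem_center m) (φ.symm (BSb m m))).symm φ
  have hpow := aExp_eq_one_of_commute_b hm hcomm
  rwa [map_zpow, IsMulTorsionFree.zpow_eq_one_iff_left hm₀] at hpow

theorem aExp_comp_eq_or [Nontrivial R] :
    aExp.comp φ.toMonoidHom = aExp ∨ aExp.comp φ.toMonoidHom = aExp⁻¹ := by
  have hb := aExp_map_b hm hm₀ φ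
  have ha : aExp (φ (BSa m m)) ^ (aExp (φ.symm (BSa m m))).toAdd = ofAdd 1 := by
    simpa [hb] using
      (map_eq_zpow_mul_zpow (aExp.comp φ.toMonoidHom) (φ.symm (BSa m m))).symm
  exact (eq_ofAdd_one_or_inv_of_zpow_eq ha).imp (fun h ↦ hom_ext (by simpa) (by simpa))
    fun h ↦ hom_ext (by simpa) (by simpa)

theorem bExp_map_b_eq_or [Nontrivial R] :
    bExp (φ (BSb m m)) = ofAdd 1 ∨ bExp (φ (BSb m m)) = (ofAdd 1)⁻¹ := by
  have hb := aExp_map_b hm hm₀ φ.symm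
  have hpow : bExp (φ (BSb m m)) ^ (bExp (φ.symm (BSb m m))).toAdd = ofAdd 1 := by
    simpa [hb] using
      (map_eq_zpow_mul_zpow (bExp.comp φ.toMonoidHom) (φ.symm (BSb m m))).symm
  exact eq_ofAdd_one_or_inv_of_zpow_eq hpow

end Automorphisms

section InvertingAutomorphisms

variable {m : ℤ} {R : Type*} [CommRing R] [IsDomain R] (hm : (m : R) = 0) {φ : BS m m ≃* BS m m}
  (hφ : aExp.comp φ.toMonoidHom = aExp⁻¹)

include hφ

theorem foxDeriv_map {g : BS m m} (hg : aExp g = 1) :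
    foxDeriv hm (φ g) = foxDeriv hm (φ (BSb m m)) * invert (foxDeriv hm g) := by
  have hφ' (x : BS m m) : aExp (φ x) = (aExp x)⁻¹ := DFunLike.congr_fun hφ x
  have hχ : ((invert : R[T;T⁻¹] ≃ₐ[R] R[T;T⁻¹]) : R[T;T⁻¹] →+* R[T;T⁻¹]).toMonoidHom.comp
      (tChar m R) = (tChar m R).comp φ.toMonoidHom := by
    ext1 x
    simp [tChar_apply, hφ']
  have hinv := ((isCrossedHom_foxDeriv hm).map
    ((invert : R[T;T⁻¹] ≃ₐ[R] R[T;T⁻¹]) : R[T;T⁻¹] →+* R[T;T⁻¹])).const_mul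
      (foxDeriv hm (φ (BSb m m)))
  refine ((isCrossedHom_foxDeriv hm).comp φ.toMonoidHom).eq_of_map_eq_one (hχ ▸ hinv)
    (closure_pair m m) ?_ ?_ ?_ ?_
  · simp [tChar_eq_one_iff, hφ']
  · simp [tChar_eq_one_iff, hφ']
  · simp
  · simp [tChar_eq_one_iff, hφ', hg]

theorem isUnit_foxDeriv_map_b (hm₀ : m ≠ 0) : IsUnit (foxDeriv hm (φ (BSb m m))) := by
  refine IsUnit.of_mul_eq_one (invert (foxDeriv hm (φ.symm (BSb m m)))) ?_
  rw [← foxDeriv_map hm hφ (aExp_map_b hm hm₀ φ.symm), φ.apply_symm_apply, foxDeriv_b]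

theorem foxDeriv_map_b_mul_invert_self (hm₀ : m ≠ 0) :
    foxDeriv hm (φ (BSb m m)) * invert (foxDeriv hm (φ (BSb m m))) = 1 := by
  rw [mul_invert_self_of_isUnit (isUnit_foxDeriv_map_b hm hφ hm₀), eval₂_one_foxDeriv]
  rcases bExp_map_b_eq_or hm hm₀ φ with h | h <;> simp [h]

include hm in
-- On the kernel of `aExp` the Fox derivative carries `φ` to the involution `Φ`, which reflects
-- exponents of `T` up to a shift and so cannot identify all the `T ^ k + Φ (T ^ k)`.
theorem infinite_quot_of_aExp_comp_eq_inv (hm₀ : m ≠ 0) :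
    Infinite (Quot (twistedConj φ.toMonoidHom)) := by
  set u := foxDeriv hm (φ (BSb m m))
  let Φ : R[T;T⁻¹] →+ R[T;T⁻¹] :=
    (AddMonoidHom.mulLeft u).comp (invert : R[T;T⁻¹] ≃ₐ[R] R[T;T⁻¹])
  have hΦ : Function.Involutive Φ := fun q ↦
    calc u * invert (u * invert q) = u * invert u * q := by
          rw [map_mul, involutive_invert q, mul_assoc]
      _ = q := by rw [foxDeriv_map_b_mul_invert_self hm hφ hm₀, one_mul]
  have foxDeriv_mul (x y : BS m m) (hx : aExp x = 1) :
      foxDeriv hm (x * y) = foxDeriv hm x + foxDeriv hm y := by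
    rw [isCrossedHom_foxDeriv, tChar_eq_one_iff.2 hx, one_mul]
  have aExp_conj_b (k : ℤ) : aExp (BSa m m ^ k * BSb m m * BSa m m ^ (-k)) = 1 := by simp
  obtain ⟨N, hN⟩ := exists_injOn_T_add_mul_invert (isUnit_foxDeriv_map_b hm hφ hm₀)
  refine twistedConj.infinite_quot
    (fun k : Set.Ici N ↦ BSa m m ^ (k : ℤ) * BSb m m * BSa m m ^ (-k : ℤ))
    fun i j hij ↦ Subtype.ext (hN i.2 j.2 ?_)
  have hΦij := twistedConj.add_map_eq_add_map hφ foxDeriv_mul hΦ (fun _ ↦ foxDeriv_map hm hφ)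
    (aExp_conj_b i) (aExp_conj_b j) hij
  rwa [foxDeriv_conj_b, foxDeriv_conj_b] at hΦij

end InvertingAutomorphisms

end BS

theorem BS_m_m_R_infty_general (m : ℤ) (hm : 1 < |m|) (φ : BS m m ≃* BS m m) :
    Infinite (Quot (twistedConj φ.toMonoidHom)) := by
  have hm₀ : m ≠ 0 := abs_pos.1 (one_pos.trans hm)
  obtain ⟨p, hp, hpm⟩ : ∃ p, p.Prime ∧ p ∣ m.natAbs :=
    Nat.exists_prime_and_dvd (by rw [Int.abs_eq_natAbs] at hm; omega)
  have : Fact p.Prime := ⟨hp⟩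
  have hpm' : (m : ZMod p) = 0 :=
    (ZMod.intCast_zmod_eq_zero_iff_dvd m p).2 (Int.natCast_dvd.2 hpm)
  rcases BS.aExp_comp_eq_or hpm' hm₀ φ with hφ | hφ
  · exact twistedConj.infinite_quot_of_comp_eq BS.aExp_surjective hφ
  · exact BS.infinite_quot_of_aExp_comp_eq_inv hpm' hφ hm₀

/-- For `m > 1`, every automorphism of `B(m,m)` has infinitely many twisted conjugacy
classes; i.e. `B(m,m)` has property `R∞`. -/
theorem BS_m_m_R_infty (m : ℤ) (hm : 1 < m) (φ : BS m m ≃* BS m m) :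
    Infinite (Quot (twistedConj φ.toMonoidHom)) :=
  BS_m_m_R_infty_general m (lt_abs.2 (Or.inl hm)) φ
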